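/- Let A ∈ {−1,+1}^{m×n} be a binary matrix, let ℓ ∈ 𝕃, let λ ∈ ℝⁿ, let v = s·e_j (s ∈ {±1}) satisfy ∇L(Aλ)ᵀAv = −‖Aᵀ∇L(Aλ)‖_∞, set γ̂ := ‖Aᵀ∇L(Aλ)‖_∞/‖∇L(Aλ)‖₁ (assume γ̂ < 1) and C := C_ℓ(ℓ⁻¹(m·L(Aλ))). If α* is a minimizer of α ↦ L(A(λ + α·v)), then (1/2)·ln((1+γ̂)/(1−γ̂)) − (1/2)·ln(C⁴) ≤ α* ≤ (1/2)·ln((1+γ̂)/(1−γ̂)) + (1/2)·ln(C⁴). Consequently, for any ν ∈ (0,1], |ν·α* − (ν/2)·ln((1+γ̂)/(1−γ̂))| ≤ (ν/2)·ln(C⁴). -/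

import Mathlib

open Real Finset

noncomputable section

/-- The property that `C` is a valid curvature constant at level `z`:
`C ≥ 1` and `C⁻¹ ≤ eˣ / ℓ⁽ⁱ⁾(x) ≤ C` for all `x ≤ z` and `i ∈ {0,1,2}`. -/
def CBound (ℓ : ℝ → ℝ) (z C : ℝ) : Prop :=
  1 ≤ C ∧ ∀ x ≤ z, ∀ i ≤ 2,
    C⁻¹ ≤ Real.exp x / iteratedDeriv i ℓ x ∧ Real.exp x / iteratedDeriv i ℓ x ≤ C

/-- `C_ℓ(z)`: the least valid curvature constant at level `z`. -/
def Cconst (ℓ : ℝ → ℝ) (z : ℝ) : ℝ := sInf {C : ℝ | CBound ℓ z C}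

/-- Membership in the class `𝕃`: positive, twice continuously differentiable,
strictly convex, and `C_ℓ(z) < ∞` (i.e. some valid constant exists) for every `z`. -/
def MemL (ℓ : ℝ → ℝ) : Prop :=
  (∀ x, 0 < ℓ x) ∧ ContDiff ℝ 2 ℓ ∧ StrictConvexOn ℝ Set.univ ℓ ∧
    ∀ z : ℝ, ∃ C : ℝ, CBound ℓ z C

/-- Membership in `𝕃_∞`: in `𝕃` and moreover `C_ℓ(z) → 1` as `z → −∞`. -/
def MemLinf (ℓ : ℝ → ℝ) : Prop :=
  MemL ℓ ∧ Filter.Tendsto (Cconst ℓ) Filter.atBot (nhds 1)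

variable {m n : ℕ}

/-- The empirical risk `L(Aλ) = (1/m) Σᵢ ℓ((Aλ)ᵢ)`. -/
def LL (ℓ : ℝ → ℝ) (A : Matrix (Fin m) (Fin n) ℝ) (lam : Fin n → ℝ) : ℝ :=
  (∑ i, ℓ (A.mulVec lam i)) / m

/-- The gradient vector `∇L(Aλ)`, with `i`-th entry `ℓ'((Aλ)ᵢ)/m`. -/
def gradL (ℓ : ℝ → ℝ) (A : Matrix (Fin m) (Fin n) ℝ) (lam : Fin n → ℝ) : Fin m → ℝ :=
  fun i => deriv ℓ (A.mulVec lam i) / m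

/-- `‖Aᵀ ∇L(Aλ)‖_∞`. -/
def gInf (ℓ : ℝ → ℝ) (A : Matrix (Fin m) (Fin n) ℝ) (lam : Fin n → ℝ) : ℝ :=
  ⨆ j : Fin n, |∑ i, gradL ℓ A lam i * A i j|

/-- `‖∇L(Aλ)‖₁`. -/
def gOne (ℓ : ℝ → ℝ) (A : Matrix (Fin m) (Fin n) ℝ) (lam : Fin n → ℝ) : ℝ :=
  ∑ i, |gradL ℓ A lam i|

/-- `γ̂ = ‖Aᵀ∇L(Aλ)‖_∞ / ‖∇L(Aλ)‖₁`. -/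
def gammaHat (ℓ : ℝ → ℝ) (A : Matrix (Fin m) (Fin n) ℝ) (lam : Fin n → ℝ) : ℝ :=
  gInf ℓ A lam / gOne ℓ A lam

/-- `C = C_ℓ(ℓ⁻¹(m · L(Aλ)))`. -/
def Cstep (ℓ : ℝ → ℝ) (A : Matrix (Fin m) (Fin n) ℝ) (lam : Fin n → ℝ) : ℝ :=
  Cconst ℓ (Function.invFun ℓ ((m : ℝ) * LL ℓ A lam))

/-- The (minimum `l¹`) margin `M(Aλ) = min_k (−(Aλ)_k) / ‖λ‖₁`. -/
def margin (A : Matrix (Fin m) (Fin n) ℝ) (lam : Fin n → ℝ) : ℝ :=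
  ⨅ k : Fin m, (-(A.mulVec lam k)) / (∑ j, |lam j|)

/-- The maximum margin `γ = max_{‖λ‖₁=1} min_i (−(Aλ)ᵢ)`. -/
def gammaMax (A : Matrix (Fin m) (Fin n) ℝ) : ℝ :=
  sSup {r : ℝ | ∃ lam : Fin n → ℝ, (∑ j, |lam j|) = 1 ∧ r = ⨅ i : Fin m, -(A.mulVec lam i)}

/-- Boosting iterates: `λ₀ = 0`, `λ_t = λ_{t-1} + α_t • v_t` where `v_t` is a signed
standard basis vector satisfying `∇L(Aλ_{t-1})ᵀ A v_t = −‖Aᵀ∇L(Aλ_{t-1})‖_∞`. -/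
def IsBoostSeq (ℓ : ℝ → ℝ) (A : Matrix (Fin m) (Fin n) ℝ)
    (lam : ℕ → Fin n → ℝ) (α : ℕ → ℝ) (v : ℕ → Fin n → ℝ) : Prop :=
  lam 0 = 0 ∧
  (∀ t : ℕ, 1 ≤ t → lam t = lam (t-1) + α t • v t) ∧
  (∀ t : ℕ, 1 ≤ t → ∃ s : ℝ, (s = 1 ∨ s = -1) ∧ ∃ j : Fin n, v t = s • (Pi.single j (1:ℝ) : Fin n → ℝ)) ∧
  (∀ t : ℕ, 1 ≤ t →
    ∑ i, gradL ℓ A (lam (t-1)) i * A.mulVec (v t) i = - gInf ℓ A (lam (t-1)))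

/-- The quantity `Υ_ν(γ)`. -/
def Upsilon (ν γ : ℝ) : ℝ :=
  ((2/ν) * Real.log 2 - (2/ν) * Real.log ((1+γ) ^ (1-ν) + (1-γ) ^ (1-ν))
      - Real.log (1-γ^2)) /
    (Real.log (1+γ) - Real.log (1-γ))

theorem Cconst_bound {ℓ : ℝ → ℝ} {z : ℝ} (h : ∃ C : ℝ, CBound ℓ z C) :
    CBound ℓ z (Cconst ℓ z) := by
  have h1 : 1 ≤ Cconst ℓ z := le_csInf h (fun C hC => hC.1)
  refine ⟨h1, fun x hx i hi => ⟨?_, le_csInf h (fun C hC => (hC.2 x hx i hi).2)⟩⟩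
  obtain ⟨C0, hC0⟩ := h
  have hr : 0 < Real.exp x / iteratedDeriv i ℓ x :=
    lt_of_lt_of_le (inv_pos.2 (by linarith [hC0.1])) (hC0.2 x hx i hi).1
  refine inv_le_of_inv_le₀ hr ?_
  refine le_csInf ⟨C0, hC0⟩ (fun C hC => ?_)
  exact inv_le_of_inv_le₀ (by linarith [hC.1]) (hC.2 x hx i hi).1

theorem CBound_use {ℓ : ℝ → ℝ} {z C : ℝ} (h : CBound ℓ z C) (x : ℝ) (hx : x ≤ z) (i : ℕ)
    (hi : i ≤ 2) : 0 < iteratedDeriv i ℓ x ∧ iteratedDeriv i ℓ x ≤ C * Real.exp x ∧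
      Real.exp x ≤ C * iteratedDeriv i ℓ x := by
  have hC : 0 < C := by linarith [h.1]
  obtain ⟨h1, h2⟩ := h.2 x hx i hi
  have hr : 0 < Real.exp x / iteratedDeriv i ℓ x := lt_of_lt_of_le (inv_pos.2 hC) h1
  have hd : 0 < iteratedDeriv i ℓ x := by
    rcases div_pos_iff.1 hr with h | h
    · exact h.2
    · exact absurd h.1 (not_lt.2 (Real.exp_pos x).le)
  refine ⟨hd, ?_, (div_le_iff₀ hd).1 h2⟩
  rw [le_div_iff₀ hd] at h1
  have := mul_le_mul_of_nonneg_left h1 hC.le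
  rwa [← mul_assoc, mul_inv_cancel₀ hC.ne', one_mul] at this

theorem MemL_deriv_pos {ℓ : ℝ → ℝ} (h : MemL ℓ) (x : ℝ) : 0 < deriv ℓ x := by
  obtain ⟨C, hC⟩ := h.2.2.2 x
  have := (CBound_use hC x le_rfl 1 (by norm_num)).1
  rwa [iteratedDeriv_one] at this

theorem MemL_surj {ℓ : ℝ → ℝ} (h : MemL ℓ) {y : ℝ} (hy : 0 < y) : ∃ z, ℓ z = y := by
  have hdiff : Differentiable ℝ ℓ := h.2.1.differentiable (by norm_num)
  obtain ⟨C, hC⟩ := h.2.2.2 0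
  have hC0 : 0 < C := by linarith [hC.1]
  obtain ⟨a, ha⟩ : ∃ a, ℓ a ≤ y := by
    refine ⟨min 0 (Real.log (y / C)), ?_⟩
    have h1 := (CBound_use hC (min 0 (Real.log (y / C))) (min_le_left _ _) 0 (by norm_num)).2.1
    rw [iteratedDeriv_zero] at h1
    have h2 : Real.exp (min 0 (Real.log (y / C))) ≤ y / C := by
      calc _ ≤ Real.exp (Real.log (y / C)) := Real.exp_le_exp.2 (min_le_right _ _)
        _ = _ := Real.exp_log (by positivity)
    calc _ ≤ _ := h1
      _ ≤ C * (y / C) := mul_le_mul_of_nonneg_left h2 hC0.le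
      _ = y := by field_simp
  obtain ⟨b, hb⟩ : ∃ b, y ≤ ℓ b := by
    have hd := MemL_deriv_pos h 0
    have hb0 : 0 < y / deriv ℓ 0 := by positivity
    refine ⟨y / deriv ℓ 0, ?_⟩
    have h1 := h.2.2.1.convexOn.deriv_le_slope (Set.mem_univ 0) (Set.mem_univ _) hb0
      (hdiff 0)
    rw [slope_def_field, le_div_iff₀ (by linarith)] at h1
    have : deriv ℓ 0 * (y / deriv ℓ 0 - 0) = y := by field_simp; ring
    linarith [h.1 0]
  have := mem_range_of_exists_le_of_exists_ge hdiff.continuous ⟨a, ha⟩ ⟨b, hb⟩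
  exact this

set_option maxHeartbeats 2000000 in
/-- for a binary matrix, the optimal step is within `(1/2)·ln(C⁴)` of
the AdaBoost step `(1/2)·ln((1+γ̂)/(1−γ̂))`; consequently, after shrinkage by
`ν ∈ (0,1]`, `|ν·α* − (ν/2)·ln((1+γ̂)/(1−γ̂))| ≤ (ν/2)·ln(C⁴)`. -/
theorem opt_near_ada_binary {m n : ℕ} (hm : 0 < m) (hn : 0 < n)
    (A : Matrix (Fin m) (Fin n) ℝ) (hA : ∀ i j, A i j = 1 ∨ A i j = -1)
    (ℓ : ℝ → ℝ) (hℓ : MemL ℓ)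
    (lam : Fin n → ℝ) (s : ℝ) (hs : s = 1 ∨ s = -1) (j : Fin n)
    (v : Fin n → ℝ) (hv : v = s • (Pi.single j (1:ℝ) : Fin n → ℝ))
    (hvgrad : ∑ i, gradL ℓ A lam i * A.mulVec v i = - gInf ℓ A lam)
    (hγ : gammaHat ℓ A lam < 1)
    (αs : ℝ)
    (hmin : ∀ β : ℝ, LL ℓ A (lam + αs • v) ≤ LL ℓ A (lam + β • v)) :
    ((1/2) * Real.log ((1 + gammaHat ℓ A lam) / (1 - gammaHat ℓ A lam)) -
        (1/2) * Real.log ((Cstep ℓ A lam)^4) ≤ αs ∧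
      αs ≤ (1/2) * Real.log ((1 + gammaHat ℓ A lam) / (1 - gammaHat ℓ A lam)) +
        (1/2) * Real.log ((Cstep ℓ A lam)^4)) ∧
    ∀ ν ∈ Set.Ioc (0:ℝ) 1,
      |ν * αs - (ν/2) * Real.log ((1 + gammaHat ℓ A lam) / (1 - gammaHat ℓ A lam))| ≤
        (ν/2) * Real.log ((Cstep ℓ A lam)^4) := by
  obtain ⟨hpos, hcd, hconv, hfin⟩ := id hℓ
  have hdiff : Differentiable ℝ ℓ := hcd.differentiable (by norm_num)
  have hdpos := MemL_deriv_pos hℓ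
  have hmono : StrictMono ℓ := strictMono_of_deriv_pos hdpos
  have hm' : (0:ℝ) < m := by exact_mod_cast hm
  have : Nonempty (Fin m) := ⟨⟨0, hm⟩⟩
  set x : Fin m → ℝ := A.mulVec lam with hx
  set b : Fin m → ℝ := A.mulVec v with hbdef
  have hb : ∀ i, b i = 1 ∨ b i = -1 := by
    intro i
    have : b i = s * A i j := by
      rw [hbdef, hv, Matrix.mulVec_smul]; simp
    rw [this]
    rcases hs with h | h <;> rcases hA i j with h' | h' <;> rw [h, h'] <;> norm_num
  have hmv : ∀ β : ℝ, A.mulVec (lam + β • v) = fun i => x i + β * b i := by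
    intro β
    ext i
    rw [Matrix.mulVec_add, Matrix.mulVec_smul]; simp [hx, hbdef]
  set y : ℝ := ∑ i, ℓ (x i) with hy
  have hy0 : 0 < y := Finset.sum_pos (fun i _ => hpos _) Finset.univ_nonempty
  have hmin' : ∀ β : ℝ, ∑ i, ℓ (x i + αs * b i) ≤ ∑ i, ℓ (x i + β * b i) := by
    intro β
    have := hmin β
    unfold LL at this
    rw [hmv, hmv] at this
    exact (div_le_div_iff_of_pos_right hm').1 this
  have hmL : (m:ℝ) * LL ℓ A lam = y := by
    unfold LL; rw [hy]; field_simp; rfl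
  set z : ℝ := Function.invFun ℓ y with hz
  have hlz : ℓ z = y := Function.invFun_eq (MemL_surj hℓ hy0)
  have hCs : Cstep ℓ A lam = Cconst ℓ z := by unfold Cstep; rw [hmL]
  rw [hCs]
  have hCb := Cconst_bound (hfin z)
  set C := Cconst ℓ z with hC
  have hC1 : 1 ≤ C := hCb.1
  have hC0 : 0 < C := by linarith
  have hxz : ∀ i, x i ≤ z := by
    intro i
    rw [← hmono.le_iff_le, hlz, hy]
    exact Finset.single_le_sum (f := fun i => ℓ (x i)) (fun i _ => (hpos _).le)
      (Finset.mem_univ i)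
  have hxz' : ∀ i, x i + αs * b i ≤ z := by
    intro i
    rw [← hmono.le_iff_le, hlz, hy]
    refine (Finset.single_le_sum (f := fun i => ℓ (x i + αs * b i)) (fun i _ => (hpos _).le)
      (Finset.mem_univ i)).trans ?_
    simpa using hmin' 0
  have hfoc : ∑ i, deriv ℓ (x i + αs * b i) * b i = 0 := by
    have hd : HasDerivAt (fun β : ℝ => ∑ i, ℓ (x i + β * b i))
        (∑ i, deriv ℓ (x i + αs * b i) * b i) αs := by
      apply HasDerivAt.fun_sum
      intro i _
      have h1 : HasDerivAt (fun β : ℝ => x i + β * b i) (b i) αs := by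
        simpa using ((hasDerivAt_id αs).mul_const (b i)).const_add (x i)
      exact HasDerivAt.comp αs (hdiff _).hasDerivAt h1
    refine IsLocalMin.hasDerivAt_eq_zero ?_ hd
    exact Filter.Eventually.of_forall hmin'
  have hbd : ∀ w ≤ z, deriv ℓ w ≤ C * Real.exp w ∧ Real.exp w ≤ C * deriv ℓ w := by
    intro w hw
    have := (CBound_use hCb w hw 1 (by norm_num)).2
    rwa [iteratedDeriv_one] at this
  have hup : ∀ i, deriv ℓ (x i + αs * b i) ≤ C ^ 2 * Real.exp (αs * b i) * deriv ℓ (x i) := by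
    intro i
    have h1 := (hbd _ (hxz' i)).1
    have h2 := (hbd _ (hxz i)).2
    rw [Real.exp_add] at h1
    have h3 := mul_le_mul_of_nonneg_left h2
      (mul_nonneg hC0.le (Real.exp_pos (αs * b i)).le)
    nlinarith
  have hlo : ∀ i, Real.exp (αs * b i) * deriv ℓ (x i) ≤ C ^ 2 * deriv ℓ (x i + αs * b i) := by
    intro i
    have h1 := (hbd _ (hxz' i)).2
    have h2 := (hbd _ (hxz i)).1
    rw [Real.exp_add] at h1
    have h3 := mul_le_mul_of_nonneg_left h2 (Real.exp_pos (αs * b i)).le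
    have h4 := mul_le_mul_of_nonneg_left h1 hC0.le
    nlinarith
  set G : ℝ := ∑ i, deriv ℓ (x i) with hG
  have hG0 : 0 < G := Finset.sum_pos (fun i _ => hdpos _) Finset.univ_nonempty
  have hgOne : gOne ℓ A lam = G / m := by
    unfold gOne gradL
    rw [hG, Finset.sum_div]
    refine Finset.sum_congr rfl (fun i _ => ?_)
    exact abs_of_pos (div_pos (hdpos _) hm')
  have hgInf : gInf ℓ A lam = - (∑ i, deriv ℓ (x i) * b i) / m := by
    have : ∑ i, gradL ℓ A lam i * b i = (∑ i, deriv ℓ (x i) * b i) / m := by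
      unfold gradL
      rw [Finset.sum_div]
      refine Finset.sum_congr rfl (fun i _ => ?_)
      rw [← hx]; ring
    rw [this] at hvgrad
    rw [neg_div]; linarith
  have hgInf0 : 0 ≤ gInf ℓ A lam := Real.iSup_nonneg (fun j => abs_nonneg _)
  have hγ0 : 0 ≤ gammaHat ℓ A lam := by
    unfold gammaHat; rw [hgOne]; positivity
  have hγG : ∑ i, deriv ℓ (x i) * b i = - (gammaHat ℓ A lam * G) := by
    unfold gammaHat
    rw [hgOne, hgInf]; field_simp
  set γ := gammaHat ℓ A lam with hγdef
  set Q : ℝ := ∑ i, deriv ℓ (x i + αs * b i) with hQ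
  have eP : ∑ i, (1 + b i) * deriv ℓ (x i) = (1 - γ) * G := by
    have : ∑ i, (1 + b i) * deriv ℓ (x i) = G + ∑ i, deriv ℓ (x i) * b i := by
      rw [hG, ← Finset.sum_add_distrib]
      exact Finset.sum_congr rfl (fun i _ => by ring)
    rw [this, hγG]; ring
  have eN : ∑ i, (1 - b i) * deriv ℓ (x i) = (1 + γ) * G := by
    have : ∑ i, (1 - b i) * deriv ℓ (x i) = G - ∑ i, deriv ℓ (x i) * b i := by
      rw [hG, ← Finset.sum_sub_distrib]
      exact Finset.sum_congr rfl (fun i _ => by ring)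
    rw [this, hγG]; ring
  have eP' : ∑ i, (1 + b i) * deriv ℓ (x i + αs * b i) = Q := by
    have : ∑ i, (1 + b i) * deriv ℓ (x i + αs * b i)
        = Q + ∑ i, deriv ℓ (x i + αs * b i) * b i := by
      rw [hQ, ← Finset.sum_add_distrib]
      exact Finset.sum_congr rfl (fun i _ => by ring)
    rw [this, hfoc, add_zero]
  have eN' : ∑ i, (1 - b i) * deriv ℓ (x i + αs * b i) = Q := by
    have : ∑ i, (1 - b i) * deriv ℓ (x i + αs * b i)
        = Q - ∑ i, deriv ℓ (x i + αs * b i) * b i := by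
      rw [hQ, ← Finset.sum_sub_distrib]
      exact Finset.sum_congr rfl (fun i _ => by ring)
    rw [this, hfoc, sub_zero]
  have a1 : Q ≤ C ^ 2 * Real.exp αs * ((1 - γ) * G) := by
    rw [← eP, ← eP', Finset.mul_sum]
    refine Finset.sum_le_sum (fun i _ => ?_)
    have := hup i
    rcases hb i with h | h <;> rw [h] at this ⊢
    · rw [mul_one] at this ⊢; linarith
    · simp
  have a2 : Real.exp αs * ((1 - γ) * G) ≤ C ^ 2 * Q := by
    rw [← eP, ← eP', Finset.mul_sum, Finset.mul_sum]
    refine Finset.sum_le_sum (fun i _ => ?_)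
    have := hlo i
    rcases hb i with h | h <;> rw [h] at this ⊢
    · rw [mul_one] at this ⊢; linarith
    · simp
  have a3 : Q ≤ C ^ 2 * Real.exp (-αs) * ((1 + γ) * G) := by
    rw [← eN, ← eN', Finset.mul_sum]
    refine Finset.sum_le_sum (fun i _ => ?_)
    have := hup i
    rcases hb i with h | h <;> rw [h] at this ⊢
    · simp
    · rw [mul_neg_one] at this ⊢; linarith
  have a4 : Real.exp (-αs) * ((1 + γ) * G) ≤ C ^ 2 * Q := by
    rw [← eN, ← eN', Finset.mul_sum, Finset.mul_sum]
    refine Finset.sum_le_sum (fun i _ => ?_)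
    have := hlo i
    rcases hb i with h | h <;> rw [h] at this ⊢
    · simp
    · rw [mul_neg_one] at this ⊢; linarith
  have hP0 : 0 < 1 - γ := by linarith
  have hN0 : 0 < 1 + γ := by linarith
  have hu : Real.exp αs * (1 - γ) ≤ C ^ 4 * (Real.exp (-αs) * (1 + γ)) := by
    have := mul_le_mul_of_nonneg_left a3 (sq_nonneg C)
    refine le_of_mul_le_mul_right ?_ hG0
    nlinarith
  have hl : Real.exp (-αs) * (1 + γ) ≤ C ^ 4 * (Real.exp αs * (1 - γ)) := by
    have := mul_le_mul_of_nonneg_left a1 (sq_nonneg C)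
    refine le_of_mul_le_mul_right ?_ hG0
    nlinarith
  have hu' := Real.log_le_log (by positivity) hu
  have hl' := Real.log_le_log (by positivity) hl
  rw [Real.log_mul (by positivity) (by positivity), Real.log_mul (by positivity) (by positivity),
    Real.log_mul (by positivity) (by positivity), Real.log_exp, Real.log_exp] at hu' hl'
  rw [Real.log_div hN0.ne' hP0.ne']
  refine ⟨⟨by linarith, by linarith⟩, ?_⟩
  rintro ν ⟨hν0, -⟩
  rw [abs_le]
  constructor <;> nlinarith
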